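/- Let P(x) = (x−x₁)(x−x₂)(x−x₃)(x−x₄)(x−x₅) with real roots x₁ < x₂ < x₃ < x₄ < x₅, let ξ₁ ≤ ξ₂ ≤ ξ₃ ≤ ξ₄ be the roots of P′ counted with multiplicity, and set z_j = (x_j + x_{j+1})/2 for j = 1, 2, 3, 4. Set m = min(z₂−z₁, z₃−z₂, z₄−z₃), M = max(z₂−z₁, z₃−z₂, z₄−z₃), m̃ = min(ξ₂−ξ₁, ξ₃−ξ₂, ξ₄−ξ₃), M̃ = max(ξ₂−ξ₁, ξ₃−ξ₂, ξ₄−ξ₃). Then it is impossible that simultaneously m > m̃ and M̃ ≤ M. (Equivalently: the case L−R+ is not realizable by a strictly hyperbolic polynomial of degree 5.) -/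

import Mathlib

/-!
Read `∑ (ξ - xᵢ)⁻¹ = 0` at a critical point `ξ` as the equilibrium of a unit charge among unit
charges at the roots. The two outer critical points lie on the outer side of the midpoint of their
root gap, whereas `ξ₂` and `ξ₃` may lie on either side of theirs. By the reflection `t ↦ -t` one may
assume `x₃ - x₂ ≤ x₄ - x₃`, and then the equilibria force `z₂ - z₁ < ξ₂ - ξ₁`.

* If `z₂ ≤ ξ₂`, every gap of critical points is larger than a gap of midpoints, namely `z₂ - z₁` or
  `z₄ - z₃`; so (L) holds.
* If `ξ₂ < z₂`, then `z₄ - z₂ < ξ₄ - ξ₂`. When (L) fails, the small gap is `ξ₃ - ξ₂` or `ξ₄ - ξ₃`,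
  so the other of these two exceeds both `z₃ - z₂` and `z₄ - z₃`, while `ξ₂ - ξ₁` exceeds
  `z₂ - z₁`; so (R) fails.
-/

theorem eq_of_strictMono_of_monotone_of_range_subset {ι α : Type*} [LinearOrder ι] [Finite ι]
    [PartialOrder α] {f g : ι → α} (hf : StrictMono f) (hg : Monotone g)
    (h : Set.range f ⊆ Set.range g) : f = g := by
  obtain ⟨σ, rfl⟩ : ∃ σ : ι → ι, g ∘ σ = f := Set.range_subset_range_iff_exists_comp.1 h |>.imp
    fun _ hσ ↦ hσ.symm
  have hσ : σ.Surjective := Finite.surjective_of_injective hf.injective.of_comp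
  have hg' : StrictMono g := hg.strictMono_of_injective (hf.injective.of_comp_right hσ)
  exact (hf.range_inj hg').1 (hσ.range_comp g)

theorem sum_inv_sub_eq_zero_of_deriv_prod_eq_zero {𝕜 ι : Type*} [NontriviallyNormedField 𝕜]
    {s : Finset ι} {x : ι → 𝕜} {t : 𝕜} (ht : ∀ i ∈ s, t ≠ x i)
    (h : deriv (fun u ↦ ∏ i ∈ s, (u - x i)) t = 0) : ∑ i ∈ s, (t - x i)⁻¹ = 0 := by
  have hlog := logDeriv_prod (f := fun i u ↦ u - x i) (fun i hi ↦ sub_ne_zero.2 (ht i hi))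
    fun i _ ↦ by fun_prop
  simpa [logDeriv_apply, h] using hlog.symm

section OrderedField

variable {𝕜 : Type*} [Field 𝕜] [LinearOrder 𝕜] [IsStrictOrderedRing 𝕜]

theorem lt_half_add_iff_inv_lt_inv {u t v : 𝕜} (hu : u < t) (hv : t < v) :
    t < (u + v) / 2 ↔ (v - t)⁻¹ < (t - u)⁻¹ := by
  rw [inv_lt_inv₀ (sub_pos.2 hv) (sub_pos.2 hu)]
  constructor <;> intro h <;> linarith

theorem sum_inv_sub_le_inv_sub {ι : Type*} {s : Finset ι} {r : ι → 𝕜} {g ρ : 𝕜}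
    (hr : ∀ i ∈ s, 0 < r i) (hg : 0 ≤ g) (hgρ : g < ρ) (h : ∑ i ∈ s, (r i)⁻¹ ≤ ρ⁻¹) :
    ∑ i ∈ s, (r i - g)⁻¹ ≤ (ρ - g)⁻¹ := by
  have hρ : 0 < ρ := hg.trans_lt hgρ
  have term_le (i : ι) (hi : i ∈ s) : (r i - g)⁻¹ ≤ (r i)⁻¹ * (ρ / (ρ - g)) := by
    have hρr : ρ ≤ r i := (inv_le_inv₀ (hr i hi) hρ).1 <|
      (Finset.single_le_sum (fun j hj ↦ (inv_pos.2 (hr j hj)).le) hi).trans h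
    have := hr i hi
    rw [← div_eq_inv_mul, inv_eq_one_div, div_div, div_le_div_iff₀ (by linarith) (by nlinarith)]
    nlinarith
  calc ∑ i ∈ s, (r i - g)⁻¹ ≤ ∑ i ∈ s, (r i)⁻¹ * (ρ / (ρ - g)) := Finset.sum_le_sum term_le
    _ = (∑ i ∈ s, (r i)⁻¹) * (ρ / (ρ - g)) := (Finset.sum_mul ..).symm
    _ ≤ ρ⁻¹ * (ρ / (ρ - g)) :=
      mul_le_mul_of_nonneg_right h (div_pos hρ (sub_pos.2 hgρ)).le
    _ = (ρ - g)⁻¹ := by field_simp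

theorem mul_add_le_mul_of_inv_add_inv_le_inv {p q r : 𝕜} (hp : 0 < p) (hq : 0 < q) (hr : 0 < r)
    (h : p⁻¹ + q⁻¹ ≤ r⁻¹) : r * (p + q) ≤ p * q := by
  rw [inv_add_inv hp.ne' hq.ne', inv_eq_one_div, div_le_div_iff₀ (by positivity) hr] at h
  linarith

end OrderedField

/- `(R - α) / (R + β)` increases with `R`; the coefficient is its value at `R = 4 α`. -/
theorem div_mul_inv_sub_le_inv_add {α β R : ℝ} (hα : 0 < α) (hβ : 0 < β) (hR : 4 * α ≤ R) :
    3 * α / (4 * α + β) * (R - α)⁻¹ ≤ (R + β)⁻¹ := by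
  have : 0 < R - α := by linarith
  rw [← div_eq_mul_inv, inv_eq_one_div, div_div, div_le_div_iff₀ (by positivity) (by linarith)]
  nlinarith [mul_nonneg (sub_nonneg.2 hR) hα.le, mul_nonneg (sub_nonneg.2 hR) hβ.le]

/- The equilibria at `ξ₁` and `ξ₂` confine `(α, γ - α) / β` to two disjoint plane regions; the line
`15 (γ - α) + α = 6 β` was chosen to separate them. -/
theorem lt_of_inv_sub_inv_add_inv_le {α β γ : ℝ} (hα : 0 < α) (hβ : 0 < β) (hγ : α < γ)
    (h : α⁻¹ - γ⁻¹ + (α + 2 * β)⁻¹ ≤ 2 / (α + 2 * γ)) : 15 * (γ - α) + α < 6 * β := by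
  have hγ₀ : 0 < γ := hα.trans hγ
  have cleared : (γ - α) * (α + 2 * β) * (α + 2 * γ) + α * γ * (α + 2 * γ)
      ≤ 2 * (α * γ * (α + 2 * β)) := by
    rw [inv_sub_inv hα.ne' hγ₀.ne', inv_eq_one_div, div_add_div _ _ (by positivity) (by positivity),
      div_le_div_iff₀ (by positivity) (by positivity)] at h
    linarith
  by_contra! hc
  obtain ⟨e, he, rfl⟩ : ∃ e, 0 ≤ e ∧ γ = α + (6 * β - α + e) / 15 :=
    ⟨15 * (γ - α) + α - 6 * β, by linarith, by ring⟩
  have cubic_pos : 0 < 139 * α ^ 3 - 434 * α ^ 2 * β + 276 * α * β ^ 2 + 144 * β ^ 3 := by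
    -- in the ratio `α / β` this cubic is smallest near `7 / 4`
    nlinarith [mul_nonneg hα.le (sq_nonneg (4 * α - 7 * β)),
      mul_nonneg hβ.le (sq_nonneg (4 * α - 7 * β)), pow_pos hβ 3, mul_pos hα (pow_pos hβ 2)]
  have : 0 ≤ e * (48 * β ^ 2 + 70 * α * β + 82 * α ^ 2) + 4 * e ^ 2 * (α + β) := by positivity
  linarith

theorem one_lt_mul_inv_add_of_lt {α β γ : ℝ} (hα : 0 < α) (hβ : 0 < β) (hγ : α < γ)
    (h : 15 * (γ - α) + α < 6 * β) :
    1 < (α + β - γ) * (β⁻¹ + (α + β + γ)⁻¹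
      + 3 * α / (4 * α + β) * (α⁻¹ - γ⁻¹ + (α + 2 * β)⁻¹)) := by
  obtain ⟨s, hs, rfl⟩ : ∃ s, 0 < s ∧ γ = α + s := ⟨γ - α, by linarith, by ring⟩
  have numerator_pos : 0 < β * (β - s) * ((4 * α + β) * (α + 2 * β) * (α + s)
      + 3 * (2 * α + β + s) * (α * (α + s) + s * (α + 2 * β)))
      - s * (2 * α + β + s) * (4 * α + β) * (α + 2 * β) * (α + s) := by
    obtain ⟨e, he, rfl⟩ : ∃ e, 0 < e ∧ β = (15 * s + α + e) / 6 :=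
      ⟨6 * β - 15 * s - α, by linarith, by ring⟩
    have cubic_pos : 0 < 434 * α ^ 3 - 3190 * s * α ^ 2 + 114678 * s ^ 3 := by
      -- in the ratio `α / s` this cubic is smallest near `5`
      nlinarith [mul_nonneg hα.le (sq_nonneg (α - 5 * s)),
        mul_nonneg hs.le (sq_nonneg (α - 5 * s)), pow_pos hs 3, pow_pos hα 3,
        mul_pos hα (pow_pos hs 2)]
    have main_pos := mul_pos (pow_pos hα 2) cubic_pos
    have remainder_pos : 0 <
        s ^ 2 * (1158 * α ^ 3 + 309960 * s ^ 2 * α + 259200 * s ^ 3)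
        + e * (944 * α ^ 4 + 10742 * s * α ^ 3 + 47916 * s ^ 2 * α ^ 2 + 96894 * s ^ 3 * α
          + 83160 * s ^ 4)
        + e ^ 2 * (588 * α ^ 3 + 3846 * s * α ^ 2 + 8982 * s ^ 2 * α + 9432 * s ^ 3)
        + e ^ 3 * (80 * α ^ 2 + 290 * s * α + 456 * s ^ 2)
        + e ^ 4 * (2 * α + 8 * s) := by positivity
    linarith
  have hne : α + β + (α + s) ≠ 0 := by positivity
  rw [← sub_pos]
  refine (div_pos numerator_pos (show 0 <
    β * (2 * α + β + s) * (4 * α + β) * (α + 2 * β) * (α + s) by positivity)).trans_eq ?_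
  field_simp
  ring

theorem inv_add_inv_add_inv_le_of_mul_add_le_mul {b c d β : ℝ} (hb : 0 < b) (hd : 0 < d)
    (hβ : 0 < β) (hbc : b ≤ c) (hβc : 2 * β ≤ c)
    (h : (d + 2 * β - b / 2) * ((c + b / 2) + (c + d + b / 2))
      ≤ (c + b / 2) * (c + d + b / 2)) :
    (c + d + β)⁻¹ + (b + c - β)⁻¹ + (c - β)⁻¹ ≤ β⁻¹ + (d + β)⁻¹ := by
  obtain ⟨γ, hγ, rfl⟩ : ∃ γ, 0 ≤ γ ∧ c = 2 * β + γ := ⟨c - 2 * β, by linarith, by ring⟩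
  -- hypothesis and conclusion are both upper bounds on `X`, the latter with a coefficient `K`
  set X := (d + β) * (2 * β + γ + d + β) with hX
  set K := β * (β + γ) - γ * (b + β + γ) with hK
  have hX₀ : 0 < X := by positivity
  have hXY : X ≤ γ ^ 2 + β * γ - β ^ 2 + 2 * b * β + 2 * b * γ + 3 / 4 * b ^ 2 := by
    linarith
  have hXK : X * K ≤ (2 * β + γ) * β * (β + γ) * (b + β + γ) := by
    rcases le_total K 0 with hK₀ | hK₀
    · exact (mul_nonpos_of_nonneg_of_nonpos hX₀.le hK₀).trans (by positivity)
    · refine (mul_le_mul_of_nonneg_right hXY hK₀).trans ?_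
      have : b ^ 2 ≤ (2 * β + γ) ^ 2 := by gcongr
      rw [hK, ← sub_nonneg]
      have : 0 ≤ β ^ 2 * (3 * ((2 * β + γ) ^ 2 - b ^ 2) / 4) := by nlinarith
      have : 0 ≤ γ * (β ^ 3 + 5 / 4 * γ * β ^ 2 + 2 * γ ^ 2 * β + γ ^ 3 + 2 * b ^ 2 * β
        + 3 / 4 * b ^ 3 + 4 * γ * b * β + 11 / 4 * γ * b ^ 2 + 3 * γ ^ 2 * b) := by positivity
      linarith
  rw [show b + (2 * β + γ) - β = b + β + γ by ring, show 2 * β + γ - β = β + γ by ring,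
    ← sub_nonneg]
  refine (div_nonneg (sub_nonneg.2 hXK) (show 0 ≤
    β * (β + γ) * (b + β + γ) * X by positivity)).trans_eq ?_
  rw [hX, hK]
  field_simp
  ring

/-- Configurations `x₁ < ξ₁ < x₂ < ξ₂ < x₃ < ξ₃ < x₄ < ξ₄ < x₅` in which every `ξⱼ` is a critical
point of `∏ (t - xᵢ)`. Criticality is the vanishing of the logarithmic derivative, written as the
balance between the roots on the left and on the right of `ξⱼ`, so that all terms are positive. -/
structure InterlacedQuintic (x₁ x₂ x₃ x₄ x₅ ξ₁ ξ₂ ξ₃ ξ₄ : ℝ) : Prop where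
  x₁_lt_ξ₁ : x₁ < ξ₁
  ξ₁_lt_x₂ : ξ₁ < x₂
  x₂_lt_ξ₂ : x₂ < ξ₂
  ξ₂_lt_x₃ : ξ₂ < x₃
  x₃_lt_ξ₃ : x₃ < ξ₃
  ξ₃_lt_x₄ : ξ₃ < x₄
  x₄_lt_ξ₄ : x₄ < ξ₄
  ξ₄_lt_x₅ : ξ₄ < x₅
  balance₁ : (ξ₁ - x₁)⁻¹ = (x₂ - ξ₁)⁻¹ + (x₃ - ξ₁)⁻¹ + (x₄ - ξ₁)⁻¹ + (x₅ - ξ₁)⁻¹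
  balance₂ : (ξ₂ - x₁)⁻¹ + (ξ₂ - x₂)⁻¹ = (x₃ - ξ₂)⁻¹ + (x₄ - ξ₂)⁻¹ + (x₅ - ξ₂)⁻¹
  balance₃ : (ξ₃ - x₁)⁻¹ + (ξ₃ - x₂)⁻¹ + (ξ₃ - x₃)⁻¹ = (x₄ - ξ₃)⁻¹ + (x₅ - ξ₃)⁻¹
  balance₄ : (ξ₄ - x₁)⁻¹ + (ξ₄ - x₂)⁻¹ + (ξ₄ - x₃)⁻¹ + (ξ₄ - x₄)⁻¹ = (x₅ - ξ₄)⁻¹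

namespace InterlacedQuintic

section Construction

variable {x₁ x₂ x₃ x₄ x₅ ξ₁ ξ₂ ξ₃ ξ₄ : ℝ}

theorem sum_inv_sub_eq_zero {t : ℝ} (h1 : t ≠ x₁) (h2 : t ≠ x₂) (h3 : t ≠ x₃) (h4 : t ≠ x₄)
    (h5 : t ≠ x₅)
    (h : deriv (fun t : ℝ => (t - x₁) * (t - x₂) * (t - x₃) * (t - x₄) * (t - x₅)) t = 0) :
    (t - x₁)⁻¹ + (t - x₂)⁻¹ + (t - x₃)⁻¹ + (t - x₄)⁻¹ + (t - x₅)⁻¹ = 0 := by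
  have hne : ∀ i ∈ Finset.univ, t ≠ ![x₁, x₂, x₃, x₄, x₅] i := by
    simp [Fin.forall_fin_succ, h1, h2, h3, h4, h5]
  have hprod : (fun t : ℝ => (t - x₁) * (t - x₂) * (t - x₃) * (t - x₄) * (t - x₅)) =
      fun t ↦ ∏ i, (t - ![x₁, x₂, x₃, x₄, x₅] i) := by
    ext t
    simp [Fin.prod_univ_five]
  rw [hprod] at h
  simpa [Fin.sum_univ_five] using sum_inv_sub_eq_zero_of_deriv_prod_eq_zero hne h

variable (hder : ∀ x : ℝ,
  deriv (fun t : ℝ => (t - x₁) * (t - x₂) * (t - x₃) * (t - x₄) * (t - x₅)) x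
    = 5 * (x - ξ₁) * (x - ξ₂) * (x - ξ₃) * (x - ξ₄))
include hder

theorem exists_mem_Ioo_of_deriv_eq {u v : ℝ} (huv : u < v)
    (hu : (u - x₁) * (u - x₂) * (u - x₃) * (u - x₄) * (u - x₅) = 0)
    (hv : (v - x₁) * (v - x₂) * (v - x₃) * (v - x₄) * (v - x₅) = 0) :
    ∃ η ∈ Set.range ![ξ₁, ξ₂, ξ₃, ξ₄], u < η ∧ η < v := by
  have hcont : Continuous fun t : ℝ =>
      (t - x₁) * (t - x₂) * (t - x₃) * (t - x₄) * (t - x₅) := by fun_prop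
  obtain ⟨η, ⟨huη, hηv⟩, hη⟩ := exists_deriv_eq_zero huv hcont.continuousOn (hu.trans hv.symm)
  refine ⟨η, ?_, huη, hηv⟩
  rw [hder] at hη
  simpa [Fin.exists_fin_succ, sub_eq_zero, eq_comm, or_comm, or_left_comm] using hη

variable (h12 : x₁ < x₂) (h23 : x₂ < x₃) (h34 : x₃ < x₄) (h45 : x₄ < x₅)
  (hξ12 : ξ₁ ≤ ξ₂) (hξ23 : ξ₂ ≤ ξ₃) (hξ34 : ξ₃ ≤ ξ₄)
include h12 h23 h34 h45 hξ12 hξ23 hξ34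

theorem interlaced_of_deriv_eq :
    (x₁ < ξ₁ ∧ ξ₁ < x₂) ∧ (x₂ < ξ₂ ∧ ξ₂ < x₃) ∧ (x₃ < ξ₃ ∧ ξ₃ < x₄) ∧ (x₄ < ξ₄ ∧ ξ₄ < x₅) := by
  obtain ⟨η₁, hη₁, hx₁, hx₁'⟩ := exists_mem_Ioo_of_deriv_eq hder h12 (by simp) (by simp)
  obtain ⟨η₂, hη₂, hx₂, hx₂'⟩ := exists_mem_Ioo_of_deriv_eq hder h23 (by simp) (by simp)
  obtain ⟨η₃, hη₃, hx₃, hx₃'⟩ := exists_mem_Ioo_of_deriv_eq hder h34 (by simp) (by simp)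
  obtain ⟨η₄, hη₄, hx₄, hx₄'⟩ := exists_mem_Ioo_of_deriv_eq hder h45 (by simp) (by simp)
  have hηξ : ![η₁, η₂, η₃, η₄] = ![ξ₁, ξ₂, ξ₃, ξ₄] := by
    apply eq_of_strictMono_of_monotone_of_range_subset
    · simp [strictMono_vecCons, hx₁'.trans hx₂, hx₂'.trans hx₃, hx₃'.trans hx₄]
    · simp [monotone_vecCons, hξ12, hξ23, hξ34]
    · rintro _ ⟨i, rfl⟩
      fin_cases i <;> assumption
  obtain ⟨rfl, rfl, rfl, rfl⟩ : η₁ = ξ₁ ∧ η₂ = ξ₂ ∧ η₃ = ξ₃ ∧ η₄ = ξ₄ := by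
    simpa [Matrix.vecCons_inj] using hηξ
  exact ⟨⟨hx₁, hx₁'⟩, ⟨hx₂, hx₂'⟩, ⟨hx₃, hx₃'⟩, hx₄, hx₄'⟩

theorem of_deriv_eq :
    InterlacedQuintic x₁ x₂ x₃ x₄ x₅ ξ₁ ξ₂ ξ₃ ξ₄ := by
  obtain ⟨⟨hx₁, hx₁'⟩, ⟨hx₂, hx₂'⟩, ⟨hx₃, hx₃'⟩, hx₄, hx₄'⟩ :=
    interlaced_of_deriv_eq hder h12 h23 h34 h45 hξ12 hξ23 hξ34
  have sum_eq_zero {t : ℝ} (h1 : t ≠ x₁) (h2 : t ≠ x₂) (h3 : t ≠ x₃) (h4 : t ≠ x₄) (h5 : t ≠ x₅)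
      (ht : 5 * (t - ξ₁) * (t - ξ₂) * (t - ξ₃) * (t - ξ₄) = 0) :
      (t - x₁)⁻¹ + (t - x₂)⁻¹ + (t - x₃)⁻¹ + (t - x₄)⁻¹ + (t - x₅)⁻¹ = 0 :=
    sum_inv_sub_eq_zero h1 h2 h3 h4 h5 ((hder t).trans ht)
  have inv_sub_comm (u v : ℝ) : (u - v)⁻¹ = -(v - u)⁻¹ := by rw [← neg_sub, inv_neg]
  refine ⟨hx₁, hx₁', hx₂, hx₂', hx₃, hx₃', hx₄, hx₄', ?_, ?_, ?_, ?_⟩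
  · have := sum_eq_zero (t := ξ₁) (by linarith) (by linarith) (by linarith) (by linarith)
      (by linarith) (by simp)
    linarith [inv_sub_comm x₂ ξ₁, inv_sub_comm x₃ ξ₁, inv_sub_comm x₄ ξ₁, inv_sub_comm x₅ ξ₁]
  · have := sum_eq_zero (t := ξ₂) (by linarith) (by linarith) (by linarith) (by linarith)
      (by linarith) (by simp)
    linarith [inv_sub_comm x₃ ξ₂, inv_sub_comm x₄ ξ₂, inv_sub_comm x₅ ξ₂]
  · have := sum_eq_zero (t := ξ₃) (by linarith) (by linarith) (by linarith) (by linarith)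
      (by linarith) (by simp)
    linarith [inv_sub_comm x₄ ξ₃, inv_sub_comm x₅ ξ₃]
  · have := sum_eq_zero (t := ξ₄) (by linarith) (by linarith) (by linarith) (by linarith)
      (by linarith) (by simp)
    linarith [inv_sub_comm x₅ ξ₄]

end Construction

variable {x₁ x₂ x₃ x₄ x₅ ξ₁ ξ₂ ξ₃ ξ₄ : ℝ}

theorem reflect (h : InterlacedQuintic x₁ x₂ x₃ x₄ x₅ ξ₁ ξ₂ ξ₃ ξ₄) :
    InterlacedQuintic (-x₅) (-x₄) (-x₃) (-x₂) (-x₁) (-ξ₄) (-ξ₃) (-ξ₂) (-ξ₁) := by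
  obtain ⟨hx₁, hx₁', hx₂, hx₂', hx₃, hx₃', hx₄, hx₄', hb₁, hb₂, hb₃, hb₄⟩ := h
  constructor <;> first | exact neg_lt_neg ‹_› | (simp only [neg_sub_neg]; linarith)

variable (h : InterlacedQuintic x₁ x₂ x₃ x₄ x₅ ξ₁ ξ₂ ξ₃ ξ₄)
include h

theorem ξ₁_lt_z₁ : ξ₁ < (x₁ + x₂) / 2 := by
  obtain ⟨hx₁, hx₁', hx₂, hx₂', hx₃, hx₃', hx₄, hx₄', hb, -, -, -⟩ := h
  rw [lt_half_add_iff_inv_lt_inv hx₁ hx₁']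
  have : 0 < (x₃ - ξ₁)⁻¹ := inv_pos.2 (by linarith)
  have : 0 < (x₄ - ξ₁)⁻¹ := inv_pos.2 (by linarith)
  have : 0 < (x₅ - ξ₁)⁻¹ := inv_pos.2 (by linarith)
  linarith

theorem z₄_lt_ξ₄ : (x₄ + x₅) / 2 < ξ₄ := by
  linarith [h.reflect.ξ₁_lt_z₁]

theorem zgap₁_lt_ξgap₂ (hz : (x₂ + x₃) / 2 ≤ ξ₂) :
    (x₂ + x₃) / 2 - (x₁ + x₂) / 2 < ξ₃ - ξ₂ := by
  obtain ⟨hx₁, hx₁', hx₂, hx₂', hx₃, hx₃', hx₄, hx₄', -, hb₂, hb₃, -⟩ := h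
  by_contra! hgap
  have near_le : (ξ₂ - x₂)⁻¹ ≤ (x₃ - ξ₂)⁻¹ :=
    inv_anti₀ (by linarith) (by linarith)
  have far_le : (x₄ - ξ₂)⁻¹ + (x₅ - ξ₂)⁻¹ ≤ (ξ₂ - x₁)⁻¹ := by linarith
  have far_le_shifted : (x₄ - ξ₃)⁻¹ + (x₅ - ξ₃)⁻¹ ≤ (ξ₂ - x₁ - (ξ₃ - ξ₂))⁻¹ := by
    have ξ₂_lt_x₄ : ξ₂ < x₄ := by linarith
    have ξ₂_lt_x₅ : ξ₂ < x₅ := by linarith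
    have := sum_inv_sub_le_inv_sub (s := Finset.univ) (r := ![x₄ - ξ₂, x₅ - ξ₂])
      (g := ξ₃ - ξ₂) (ρ := ξ₂ - x₁)
      (by simp [Fin.forall_fin_two, ξ₂_lt_x₄, ξ₂_lt_x₅]) (by linarith) (by linarith)
      (by simpa [Fin.sum_univ_two] using far_le)
    simpa [Fin.sum_univ_two] using this
  have : (ξ₂ - x₁ - (ξ₃ - ξ₂))⁻¹ ≤ (ξ₃ - x₃)⁻¹ := inv_anti₀ (by linarith) (by linarith)
  have : 0 < (ξ₃ - x₁)⁻¹ := inv_pos.2 (by linarith)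
  have : 0 < (ξ₃ - x₂)⁻¹ := inv_pos.2 (by linarith)
  linarith

theorem inv_add_inv_le_of_z₂_le_ξ₂ (hz : (x₂ + x₃) / 2 ≤ ξ₂) :
    (x₄ - (x₂ + x₃) / 2)⁻¹ + (x₅ - (x₂ + x₃) / 2)⁻¹ ≤ ((x₂ + x₃) / 2 - x₁)⁻¹ := by
  obtain ⟨hx₁, hx₁', hx₂, hx₂', hx₃, hx₃', hx₄, hx₄', -, hb, -, -⟩ := h
  have near_le : (ξ₂ - x₂)⁻¹ ≤ (x₃ - ξ₂)⁻¹ := inv_anti₀ (by linarith) (by linarith)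
  calc (x₄ - (x₂ + x₃) / 2)⁻¹ + (x₅ - (x₂ + x₃) / 2)⁻¹
      ≤ (x₄ - ξ₂)⁻¹ + (x₅ - ξ₂)⁻¹ := by gcongr <;> linarith
    _ ≤ (ξ₂ - x₁)⁻¹ := by linarith
    _ ≤ ((x₂ + x₃) / 2 - x₁)⁻¹ := by gcongr; linarith

theorem zgap₁_lt_ξgap₃ (hbc : x₃ - x₂ ≤ x₄ - x₃) (hz₂ : (x₂ + x₃) / 2 ≤ ξ₂)
    (hz₃ : (x₃ + x₄) / 2 ≤ ξ₃) : (x₂ + x₃) / 2 - (x₁ + x₂) / 2 < ξ₄ - ξ₃ := by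
  by_contra! hgap
  have hz₄ := h.z₄_lt_ξ₄
  have hinv := h.inv_add_inv_le_of_z₂_le_ξ₂ hz₂
  obtain ⟨hx₁, hx₁', hx₂, hx₂', -, hx₃', -, hx₄', -, -, hb, -⟩ := h
  have hwide : (x₅ - x₄) + 2 * (x₄ - ξ₃) - (x₃ - x₂) / 2 ≤ (x₂ + x₃) / 2 - x₁ := by linarith
  have hprod := (mul_le_mul_of_nonneg_right hwide (by linarith)).trans
    (mul_add_le_mul_of_inv_add_inv_le_inv (by linarith) (by linarith) (by linarith) hinv)
  have key : (x₅ - x₃ + (x₄ - ξ₃))⁻¹ + (ξ₃ - x₂)⁻¹ + (ξ₃ - x₃)⁻¹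
      ≤ (x₄ - ξ₃)⁻¹ + (x₅ - ξ₃)⁻¹ := by
    simpa only [sub_add_sub_cancel', sub_sub_sub_cancel_left, sub_add_sub_cancel] using
      inv_add_inv_add_inv_le_of_mul_add_le_mul (b := x₃ - x₂) (c := x₄ - x₃) (d := x₅ - x₄)
        (β := x₄ - ξ₃) (by linarith) (by linarith) (by linarith) hbc (by linarith)
        (by linarith [hprod])
  have : (ξ₃ - x₁)⁻¹ < (x₅ - x₃ + (x₄ - ξ₃))⁻¹ := by gcongr <;> linarith
  linarith

theorem le_far_force_ξ₂ :
    (ξ₂ - x₂)⁻¹ - (x₃ - ξ₂)⁻¹ + (ξ₂ - x₂ + 2 * (x₂ - ξ₁))⁻¹ ≤ (x₄ - ξ₂)⁻¹ + (x₅ - ξ₂)⁻¹ := by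
  have hz₁ := h.ξ₁_lt_z₁
  have : (ξ₂ - x₂ + 2 * (x₂ - ξ₁))⁻¹ ≤ (ξ₂ - x₁)⁻¹ :=
    inv_anti₀ (by linarith [h.x₁_lt_ξ₁, h.ξ₁_lt_x₂, h.x₂_lt_ξ₂]) (by linarith)
  linarith [h.balance₂]

theorem far_force_ξ₂_le (hbc : x₃ - x₂ ≤ x₄ - x₃) :
    (x₄ - ξ₂)⁻¹ + (x₅ - ξ₂)⁻¹ ≤ 2 / (ξ₂ - x₂ + 2 * (x₃ - ξ₂)) := by
  obtain ⟨-, -, hx₂, hx₂', -, -, hx₄, hx₄', -, -, -, -⟩ := h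
  rw [div_eq_mul_inv, two_mul]
  gcongr <;> linarith

theorem zgap₁_lt_ξgap₁ (hbc : x₃ - x₂ ≤ x₄ - x₃) :
    (x₂ + x₃) / 2 - (x₁ + x₂) / 2 < ξ₂ - ξ₁ := by
  by_contra! hgap
  have hz₁ := h.ξ₁_lt_z₁
  have lower := h.le_far_force_ξ₂
  have upper := h.far_force_ξ₂_le hbc
  obtain ⟨-, hx₁', hx₂, -, -, -, hx₄, hx₄', hb₁, -, -, -⟩ := h
  set α := ξ₂ - x₂ with hα
  set β := x₂ - ξ₁ with hβ
  set γ := x₃ - ξ₂ with hγ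
  have hα₀ : 0 < α := sub_pos.2 hx₂
  have hβ₀ : 0 < β := sub_pos.2 hx₁'
  have hαγ : α < γ := by linarith [hα, hβ, hγ]
  have hsep := lt_of_inv_sub_inv_add_inv_le hα₀ hβ₀ hαγ (lower.trans upper)
  have far₄ := div_mul_inv_sub_le_inv_add hα₀ hβ₀ (R := x₄ - x₂) (by linarith)
  have far₅ := div_mul_inv_sub_le_inv_add hα₀ hβ₀ (R := x₅ - x₂) (by linarith)
  rw [sub_sub_sub_cancel_right, sub_add_sub_cancel] at far₄ far₅
  have force_le : β⁻¹ + (α + β + γ)⁻¹ + 3 * α / (4 * α + β) * (α⁻¹ - γ⁻¹ + (α + 2 * β)⁻¹)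
      ≤ (ξ₁ - x₁)⁻¹ := by
    have := mul_le_mul_of_nonneg_left lower (show 0 ≤ 3 * α / (4 * α + β) by positivity)
    rw [hb₁, show x₃ - ξ₁ = α + β + γ by ring]
    linarith
  refine (one_lt_mul_inv_add_of_lt hα₀ hβ₀ hαγ hsep).not_ge ?_
  calc (α + β - γ) * (β⁻¹ + (α + β + γ)⁻¹
        + 3 * α / (4 * α + β) * (α⁻¹ - γ⁻¹ + (α + 2 * β)⁻¹))
      ≤ (α + β - γ) * (ξ₁ - x₁)⁻¹ := mul_le_mul_of_nonneg_left force_le (by linarith)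
    _ ≤ 1 := by
      rw [← div_eq_mul_inv, div_le_one (by linarith)]
      linarith

end InterlacedQuintic

/-- The smallest gap between consecutive entries of `t₁ ≤ t₂ ≤ t₃ ≤ t₄`: the paper's `m` for the
midpoints and `m̃` for the critical points. -/
def minGap (t₁ t₂ t₃ t₄ : ℝ) : ℝ := min (min (t₂ - t₁) (t₃ - t₂)) (t₄ - t₃)

/-- The largest gap between consecutive entries of `t₁ ≤ t₂ ≤ t₃ ≤ t₄`: the paper's `M` for the
midpoints and `M̃` for the critical points. -/
def maxGap (t₁ t₂ t₃ t₄ : ℝ) : ℝ := max (max (t₂ - t₁) (t₃ - t₂)) (t₄ - t₃)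

theorem minGap_neg_rev (t₁ t₂ t₃ t₄ : ℝ) :
    minGap (-t₄) (-t₃) (-t₂) (-t₁) = minGap t₁ t₂ t₃ t₄ := by
  simp only [minGap, neg_sub_neg, min_comm, min_left_comm]

theorem maxGap_neg_rev (t₁ t₂ t₃ t₄ : ℝ) :
    maxGap (-t₄) (-t₃) (-t₂) (-t₁) = maxGap t₁ t₂ t₃ t₄ := by
  simp only [maxGap, neg_sub_neg, max_comm, max_left_comm]

theorem min_min_le_or_max_max_lt {α : Type*} [AddCommGroup α] [LinearOrder α]
    [IsOrderedAddMonoid α] {a b c a' b' c' : α} (ha : a < a') (hbc : b + c < b' + c') :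
    min (min a b) c ≤ min (min a' b') c' ∨ max (max a b) c < max (max a' b') c' := by
  grind

namespace InterlacedQuintic

variable {x₁ x₂ x₃ x₄ x₅ ξ₁ ξ₂ ξ₃ ξ₄ : ℝ}

theorem minGap_le_or_maxGap_lt_of_le (h : InterlacedQuintic x₁ x₂ x₃ x₄ x₅ ξ₁ ξ₂ ξ₃ ξ₄)
    (hbc : x₃ - x₂ ≤ x₄ - x₃) :
    minGap ((x₁ + x₂) / 2) ((x₂ + x₃) / 2) ((x₃ + x₄) / 2) ((x₄ + x₅) / 2)
        ≤ minGap ξ₁ ξ₂ ξ₃ ξ₄ ∨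
      maxGap ((x₁ + x₂) / 2) ((x₂ + x₃) / 2) ((x₃ + x₄) / 2) ((x₄ + x₅) / 2)
        < maxGap ξ₁ ξ₂ ξ₃ ξ₄ := by
  have hgap₁ := h.zgap₁_lt_ξgap₁ hbc
  have hz₄ := h.z₄_lt_ξ₄
  rcases le_total ((x₂ + x₃) / 2) ξ₂ with hz₂ | hz₂
  · left
    have hgap₂ := h.zgap₁_lt_ξgap₂ hz₂
    rcases le_total ((x₃ + x₄) / 2) ξ₃ with hz₃ | hz₃
    · have hgap₃ := h.zgap₁_lt_ξgap₃ hbc hz₂ hz₃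
      simp [minGap, hgap₁.le, hgap₂.le, hgap₃.le]
    · have hgap₃ : (x₄ + x₅) / 2 - (x₃ + x₄) / 2 ≤ ξ₄ - ξ₃ := by linarith
      simp [minGap, hgap₁.le, hgap₂.le, hgap₃]
  · exact min_min_le_or_max_max_lt hgap₁ (by linarith)

theorem minGap_le_or_maxGap_lt (h : InterlacedQuintic x₁ x₂ x₃ x₄ x₅ ξ₁ ξ₂ ξ₃ ξ₄) :
    minGap ((x₁ + x₂) / 2) ((x₂ + x₃) / 2) ((x₃ + x₄) / 2) ((x₄ + x₅) / 2)
        ≤ minGap ξ₁ ξ₂ ξ₃ ξ₄ ∨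
      maxGap ((x₁ + x₂) / 2) ((x₂ + x₃) / 2) ((x₃ + x₄) / 2) ((x₄ + x₅) / 2)
        < maxGap ξ₁ ξ₂ ξ₃ ξ₄ := by
  rcases le_total (x₃ - x₂) (x₄ - x₃) with hbc | hcb
  · exact h.minGap_le_or_maxGap_lt_of_le hbc
  · have := h.reflect.minGap_le_or_maxGap_lt_of_le (by linarith)
    have half (u v : ℝ) : (-v + -u) / 2 = -((u + v) / 2) := by ring
    simpa only [half, minGap_neg_rev, maxGap_neg_rev] using this

end InterlacedQuintic

/-- The case L−R+ is not realizable by a strictly hyperbolic polynomial of degree 5: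
for `P(x) = (x-x₁)⋯(x-x₅)` with `x₁ < ⋯ < x₅`, roots `ξ₁ ≤ ξ₂ ≤ ξ₃ ≤ ξ₄` of `P'`
(counted with multiplicity) and midpoints `z j = (x j + x (j+1))/2`, one cannot have
simultaneously `m > m̃` and `M̃ ≤ M`. -/
theorem quintic_LminusRplus_not_realizable
    (x₁ x₂ x₃ x₄ x₅ : ℝ) (h12 : x₁ < x₂) (h23 : x₂ < x₃) (h34 : x₃ < x₄) (h45 : x₄ < x₅)
    (ξ₁ ξ₂ ξ₃ ξ₄ : ℝ) (hξ12 : ξ₁ ≤ ξ₂) (hξ23 : ξ₂ ≤ ξ₃) (hξ34 : ξ₃ ≤ ξ₄)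
    (hder : ∀ x : ℝ,
      deriv (fun t : ℝ => (t - x₁) * (t - x₂) * (t - x₃) * (t - x₄) * (t - x₅)) x
        = 5 * (x - ξ₁) * (x - ξ₂) * (x - ξ₃) * (x - ξ₄))
    (z₁ z₂ z₃ z₄ m M mt Mt : ℝ)
    (hz₁ : z₁ = (x₁ + x₂) / 2) (hz₂ : z₂ = (x₂ + x₃) / 2)
    (hz₃ : z₃ = (x₃ + x₄) / 2) (hz₄ : z₄ = (x₄ + x₅) / 2)
    (hm : m = min (min (z₂ - z₁) (z₃ - z₂)) (z₄ - z₃))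
    (hM : M = max (max (z₂ - z₁) (z₃ - z₂)) (z₄ - z₃))
    (hmt : mt = min (min (ξ₂ - ξ₁) (ξ₃ - ξ₂)) (ξ₄ - ξ₃))
    (hMt : Mt = max (max (ξ₂ - ξ₁) (ξ₃ - ξ₂)) (ξ₄ - ξ₃)) :
    ¬ (mt < m ∧ Mt ≤ M) := by
  subst hz₁ hz₂ hz₃ hz₄ hm hM hmt hMt
  rintro ⟨hmin, hmax⟩
  have h := InterlacedQuintic.of_deriv_eq hder h12 h23 h34 h45 hξ12 hξ23 hξ34
  rcases h.minGap_le_or_maxGap_lt with hL | hR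
  · exact hL.not_gt hmin
  · exact hR.not_ge hmax
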